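/- The set of functions ρ : ℝ≥0 → ℝ (on the additive monoid of nonnegative reals) satisfying ρ(0) = 1, ρ(x + y) = ρ(x)·ρ(y) for all x, y ≥ 0, and 0 ≤ ρ(s) ≤ 1 for all s ≥ 0, endowed with the topology of pointwise convergence (the subspace topology from the product topology on ℝ≥0 → ℝ), is path-connected. -/

import Mathlib

/-!
Let `w : S → [0, ∞)` be additive and vanish only at `0`. For `0 ≤ r ≤ 1` the function `s ↦ r ^ w s`
is a semicharacter, equal to `1` at `r = 1` and, since `0 ^ 0 = 1`, to the indicator function of
`{0}` at `r = 0`. Multiplying it by `ρ` and letting `r` run from `0` to `1` therefore gives a path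
from the indicator function of `{0}`, which does not depend on `ρ`, to `ρ`. In terms of a
semicharacter `κ` with `0 < κ s < 1` for `s ≠ 0`, as in the paper, `w = -log κ`; on `[0, ∞)`, the
choice `κ s = exp (-s)` corresponds to `w = id`.
-/

open Set
open scoped NNReal

/-- The semicharacters of `S` with values in `[0, 1]`, denoted `S*_1` in the paper. As a submonoid
of `S → ℝ` under pointwise multiplication, the space carries the topology of pointwise
convergence. -/
def semicharSpace (S : Type*) [Zero S] [Add S] : Submonoid (S → ℝ) where
  carrier := {ρ | ρ 0 = 1 ∧ (∀ x y, ρ (x + y) = ρ x * ρ y) ∧ ∀ s, ρ s ∈ Icc (0 : ℝ) 1}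
  one_mem' := by simp
  mul_mem' := by
    rintro ρ σ ⟨hρ_zero, hρ_add, hρ_Icc⟩ ⟨hσ_zero, hσ_add, hσ_Icc⟩
    refine ⟨by simp [hρ_zero, hσ_zero], fun x y => ?_, fun s => ?_⟩
    · simp only [Pi.mul_apply, hρ_add, hσ_add, mul_mul_mul_comm]
    · exact unitInterval.mul_mem (hρ_Icc s) (hσ_Icc s)

section PowSemichar

variable {S : Type*} [AddZeroClass S] (w : S →+ ℝ≥0)

/-- The semicharacter `s ↦ r ^ w s` attached to an additive weight `w` and a base `r ∈ [0, 1]`. The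
base ranges over `ℝ` so that intervals of bases parametrize paths. -/
noncomputable def powSemichar (r : ℝ) : S → ℝ := fun s => r ^ (w s : ℝ)

theorem powSemichar_one : powSemichar w 1 = 1 :=
  funext fun _ => Real.one_rpow _

theorem continuous_powSemichar : Continuous (powSemichar w) :=
  continuous_pi fun s => Real.continuous_rpow_const (w s).coe_nonneg

theorem powSemichar_mem_semicharSpace {r : ℝ} (hr : r ∈ Icc 0 1) :
    powSemichar w r ∈ semicharSpace S := by
  refine ⟨by simp [powSemichar], fun x y => ?_, fun s => ⟨?_, ?_⟩⟩
  · simpa only [powSemichar, map_add, NNReal.coe_add] using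
      Real.rpow_add_of_nonneg hr.1 (w x).coe_nonneg (w y).coe_nonneg
  · exact Real.rpow_nonneg hr.1 _
  · exact Real.rpow_le_one hr.1 hr.2 (w s).coe_nonneg

variable {w}

theorem mul_powSemichar_zero (hw : ∀ s, w s = 0 → s = 0) {ρ : S → ℝ} (hρ : ρ 0 = 1) :
    ρ * powSemichar w 0 = powSemichar w 0 := by
  funext s
  rcases eq_or_ne s 0 with rfl | hs
  · simp [hρ]
  · have hws : (w s : ℝ) ≠ 0 := NNReal.coe_ne_zero.mpr (mt (hw s) hs)
    simp [powSemichar, Real.zero_rpow hws]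

theorem joinedIn_semicharSpace_powSemichar_zero (hw : ∀ s, w s = 0 → s = 0) {ρ : S → ℝ}
    (hρ : ρ ∈ semicharSpace S) : JoinedIn (semicharSpace S) (powSemichar w 0) ρ := by
  have hcont : Continuous fun r => ρ * powSemichar w r :=
    continuous_const.mul (continuous_powSemichar w)
  refine JoinedIn.ofLine hcont.continuousOn (mul_powSemichar_zero hw hρ.1) ?_ ?_
  · rw [powSemichar_one, mul_one]
  · rintro _ ⟨r, hr, rfl⟩
    exact mul_mem hρ (powSemichar_mem_semicharSpace w hr)

theorem semicharSpace_nnreal_pathConnected_general (hw : ∀ s, w s = 0 → s = 0) :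
    PathConnectedSpace (semicharSpace S) :=
  isPathConnected_iff_pathConnectedSpace.mp
    ⟨powSemichar w 0, powSemichar_mem_semicharSpace w unitInterval.zero_mem,
      fun _ hρ => joinedIn_semicharSpace_powSemichar_zero hw hρ⟩

end PowSemichar

/-- The space of bounded nonnegative semicharacters of the additive monoid `[0,∞)` — functions
`ρ : ℝ≥0 → ℝ` with `ρ 0 = 1`, `ρ (x + y) = ρ x * ρ y`, and `0 ≤ ρ s ≤ 1`, with the topology of
pointwise convergence — is path-connected. -/
theorem semicharSpace_nnreal_pathConnected :
    PathConnectedSpace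
      {ρ : NNReal → ℝ // ρ 0 = 1 ∧ (∀ x y : NNReal, ρ (x + y) = ρ x * ρ y) ∧
        ∀ s : NNReal, ρ s ∈ Set.Icc (0 : ℝ) 1} :=
  semicharSpace_nnreal_pathConnected_general (w := AddMonoidHom.id ℝ≥0) fun _ hs => hs
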